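/- arXiv:1108.3728 — 2 statements merged into one kernel-verified Lean document; each statement's English description precedes it below -/
import Mathlib

section
/- The distribution preserving rate-distortion function for a Gaussian distribution N(μ_X, σ_X²) on ℝ and the squared-error distortion e(x, x̃) = (x − x̃)² is R_DP(D) = log( σ_X² / (σ_X² D − D²/4)^{1/2} ) for 0 < D < 2σ_X², and R_DP(D) = 0 for D ≥ 2σ_X². -/
open MeasureTheory ProbabilityTheory Real
open scoped ENNReal NNReal Classical

/-- Kullback–Leibler divergence of `μ` from `ν` (in nats), `∞` if `μ` is not absolutely
continuous w.r.t. `ν` or if the log-likelihood ratio is not integrable. -/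
noncomputable def klDiv {α : Type*} [MeasurableSpace α] (μ ν : Measure α) : ℝ≥0∞ :=
  if μ ≪ ν ∧ Integrable (llr μ ν) μ then ENNReal.ofReal (∫ x, llr μ ν x ∂μ) else ⊤

/-- Mutual information of a joint distribution: the KL divergence of the joint law from the
product of its two marginal laws. -/
noncomputable def mutualInfo {α β : Type*} [MeasurableSpace α] [MeasurableSpace β]
    (ρ : Measure (α × β)) : ℝ≥0∞ :=
  klDiv ρ ((ρ.map Prod.fst).prod (ρ.map Prod.snd))

/-- The distribution preserving rate-distortion function: the infimum of the mutual information
over all joint distributions whose two marginals both equal the source distribution `μ` and whose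
expected distortion is at most `D`. -/
noncomputable def RDP {V : Type*} [MeasurableSpace V] (μ : Measure V) (e : V × V → ℝ)
    (D : ℝ≥0∞) : ℝ≥0∞ :=
  ⨅ ρ ∈ {ρ : Measure (V × V) | IsProbabilityMeasure ρ ∧ ρ.map Prod.fst = μ ∧
      ρ.map Prod.snd = μ ∧ ∫⁻ p, ENNReal.ofReal (e p) ∂ρ ≤ D}, mutualInfo ρ

/-! A coupling `ρ` of `μ` with itself satisfies `I(ρ) = KL(ρ ‖ μ ⊗ μ)`. By the Donsker–Varadhan
inequality, `∫ f dρ - log ∫ exp f d(μ ⊗ μ) ≤ KL(ρ ‖ μ ⊗ μ)`, with equality when `ρ` is the measure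
`μ ⊗ μ` tilted by `f`. If `f(x, y) = a(x) + b(y) - s e(x, y)` with `s ≥ 0`, then `∫ f dρ` depends on
`ρ` only through its distortion, so the inequality bounds the rate of all admissible couplings at
once, and a tilted measure with both marginals equal to `μ` attains the bound at its own distortion.

For `μ = N(m, v)` and the squared error, the bivariate Gaussian law with correlation `r` is such a
tilted measure, its distortion is `2v(1 - r)`, and the bound is `-log √(1 - r²)`. -/

section KullbackLeibler

variable {α : Type*} [MeasurableSpace α] {ρ ν : Measure α} {f : α → ℝ}

theorem klDiv_self [SigmaFinite ν] : klDiv ν ν = 0 := by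
  have hint : Integrable (llr ν ν) ν :=
    (integrable_congr (llr_self ν)).2 (integrable_zero α ℝ ν)
  rw [klDiv, if_pos ⟨.rfl, hint⟩, integral_congr_ae (llr_self ν)]
  simp

theorem ofReal_integral_sub_log_integral_exp_le_klDiv [IsProbabilityMeasure ρ] [SigmaFinite ν]
    (hf : Integrable f ρ) (hexp : Integrable (fun x ↦ exp (f x)) ν) :
    ENNReal.ofReal (∫ x, f x ∂ρ - log (∫ x, exp (f x) ∂ν)) ≤ klDiv ρ ν := by
  rw [klDiv]
  split_ifs with h
  · obtain ⟨hac, hllr⟩ := h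
    have gibbs := InformationTheory.integral_llr_add_sub_measure_univ_nonneg
      (hac.trans (absolutelyContinuous_tilted hexp)) (integrable_llr_tilted_right hac hf hllr hexp)
    rw [integral_llr_tilted_right hac hf hexp hllr, probReal_univ (μ := ρ)] at gibbs
    have htilted : (ν.tilted f).real Set.univ ≤ 1 :=
      ENNReal.toReal_le_of_le_ofReal zero_le_one (by simpa using prob_le_one)
    exact ENNReal.ofReal_le_ofReal (by linarith)
  · exact le_top

theorem klDiv_tilted_left [SigmaFinite ν] [NeZero ν] (hf : Integrable f (ν.tilted f))
    (hexp : Integrable (fun x ↦ exp (f x)) ν) :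
    klDiv (ν.tilted f) ν = ENNReal.ofReal (∫ x, f x ∂(ν.tilted f) - log (∫ x, exp (f x) ∂ν)) := by
  have : IsProbabilityMeasure (ν.tilted f) := isProbabilityMeasure_tilted hexp
  have hac : ν.tilted f ≪ ν := tilted_absolutelyContinuous ν f
  have hllr : llr (ν.tilted f) ν =ᵐ[ν.tilted f] fun x ↦ f x - log (∫ x, exp (f x) ∂ν) :=
    hac (log_rnDeriv_tilted_left_self hexp)
  have hint : Integrable (llr (ν.tilted f) ν) (ν.tilted f) :=
    (integrable_congr hllr).2 (hf.sub (integrable_const _))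
  rw [klDiv, if_pos ⟨hac, hint⟩, integral_congr_ae hllr, integral_sub hf (integrable_const _)]
  simp

end KullbackLeibler

section Tilted

variable {α β : Type*} [MeasurableSpace α] [MeasurableSpace β]

section NormalizingConstant

variable {ρ ν : Measure α} {f : α → ℝ} {c : ℝ} [IsProbabilityMeasure ρ]

theorem integrable_exp_of_withDensity_eq_smul (hf : Measurable f)
    (h : ν.withDensity (fun x ↦ ENNReal.ofReal (exp (f x))) = ENNReal.ofReal c • ρ) :
    Integrable (fun x ↦ exp (f x)) ν := by
  rw [← lintegral_ofReal_ne_top_iff_integrable (by fun_prop) (ae_of_all _ fun _ ↦ (exp_pos _).le),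
    ← setLIntegral_univ, ← withDensity_apply _ .univ, h]
  simp

theorem integral_exp_of_withDensity_eq_smul (hf : Measurable f) (hc : 0 ≤ c)
    (h : ν.withDensity (fun x ↦ ENNReal.ofReal (exp (f x))) = ENNReal.ofReal c • ρ) :
    ∫ x, exp (f x) ∂ν = c := by
  rw [integral_eq_lintegral_of_nonneg_ae (ae_of_all _ fun _ ↦ (exp_pos _).le) (by fun_prop),
    ← setLIntegral_univ, ← withDensity_apply _ .univ, h]
  simp [hc]

theorem tilted_eq_of_withDensity_eq_smul (hf : Measurable f) (hc : 0 < c)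
    (h : ν.withDensity (fun x ↦ ENNReal.ofReal (exp (f x))) = ENNReal.ofReal c • ρ) :
    ν.tilted f = ρ := by
  have hdensity : (fun x ↦ ENNReal.ofReal (exp (f x) / c)) =
      ENNReal.ofReal c⁻¹ • fun x ↦ ENNReal.ofReal (exp (f x)) := by
    ext x
    rw [Pi.smul_apply, smul_eq_mul, ← ENNReal.ofReal_mul (by positivity), div_eq_inv_mul]
  rw [Measure.tilted, integral_exp_of_withDensity_eq_smul hf hc.le h, hdensity,
    withDensity_smul _ (by fun_prop), h, smul_smul, ← ENNReal.ofReal_mul (by positivity),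
    inv_mul_cancel₀ hc.ne', ENNReal.ofReal_one, one_smul]

end NormalizingConstant

theorem prod_withDensity_eq_smul_compProd {μ : Measure α} {ν : Measure β} [SFinite μ] [SFinite ν]
    {κ : Kernel α β} [IsSFiniteKernel κ] {g : α × β → ℝ≥0∞} (hg : Measurable g) {c : ℝ≥0∞}
    (h : ∀ x, ν.withDensity (fun y ↦ g (x, y)) = c • κ x) :
    (μ.prod ν).withDensity g = c • (μ ⊗ₘ κ) := by
  refine Measure.ext_of_lintegral _ fun φ hφ ↦ ?_
  have hinner (x : α) : ∫⁻ y, (g * φ) (x, y) ∂ν = c * ∫⁻ y, φ (x, y) ∂κ x := by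
    rw [← smul_eq_mul c, ← lintegral_smul_measure, ← h x,
      lintegral_withDensity_eq_lintegral_mul _ (by fun_prop) (by fun_prop)]
    rfl
  rw [lintegral_withDensity_eq_lintegral_mul _ hg hφ, lintegral_prod _ (by fun_prop),
    lintegral_smul_measure, Measure.lintegral_compProd hφ, smul_eq_mul,
    ← lintegral_const_mul _ (by fun_prop)]
  exact lintegral_congr hinner

theorem measurePreserving_tilted {ν : Measure α} {T : α → α} (hT : MeasurePreserving T ν ν)
    {f : α → ℝ} (hf : Measurable f) (hfT : ∀ x, f (T x) = f x) :
    MeasurePreserving T (ν.tilted f) (ν.tilted f) := by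
  refine ⟨hT.measurable, Measure.ext_of_lintegral _ fun φ hφ ↦ ?_⟩
  rw [lintegral_map hφ hT.measurable, lintegral_tilted, lintegral_tilted]
  simpa only [hfT] using hT.lintegral_comp
    (f := fun x ↦ ENNReal.ofReal (exp (f x) / ∫ x, exp (f x) ∂ν) * φ x) (by fun_prop)

theorem map_snd_eq_map_fst_of_measurePreserving_swap {ρ : Measure (α × α)}
    (hρ : MeasurePreserving Prod.swap ρ ρ) : ρ.map Prod.snd = ρ.map Prod.fst := by
  conv_rhs => rw [← hρ.map_eq, Measure.map_map measurable_fst measurable_swap]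
  rfl

end Tilted

/-- The function `f(x, y) = a(x) + b(y) - s e(x, y)` for which the Donsker–Varadhan inequality is
the Lagrange dual bound on the rate: `a` and `b` are the multipliers of the two marginal
constraints and `s` is the multiplier of the distortion constraint. -/
def lagrangeExponent {α β : Type*} (a : α → ℝ) (b : β → ℝ) (s : ℝ) (e : α × β → ℝ)
    (p : α × β) : ℝ :=
  a p.1 + b p.2 - s * e p

section LagrangeExponent

variable {α β : Type*} [MeasurableSpace α] [MeasurableSpace β] {ρ : Measure (α × β)}
  {a : α → ℝ} {b : β → ℝ} {s : ℝ} {e : α × β → ℝ}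

theorem measurable_lagrangeExponent (ha : Measurable a) (hb : Measurable b) (he : Measurable e) :
    Measurable (lagrangeExponent a b s e) := by
  unfold lagrangeExponent
  fun_prop

theorem integrable_lagrangeExponent (ha : Integrable a (ρ.map Prod.fst))
    (hb : Integrable b (ρ.map Prod.snd)) (he : Integrable e ρ) :
    Integrable (lagrangeExponent a b s e) ρ :=
  ((ha.comp_measurable measurable_fst).add (hb.comp_measurable measurable_snd)).sub
    (he.const_mul s)

theorem integral_lagrangeExponent (ha : Integrable a (ρ.map Prod.fst))
    (hb : Integrable b (ρ.map Prod.snd)) (he : Integrable e ρ) :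
    ∫ p, lagrangeExponent a b s e p ∂ρ =
      ∫ x, a x ∂(ρ.map Prod.fst) + ∫ y, b y ∂(ρ.map Prod.snd) - s * ∫ p, e p ∂ρ := by
  have ha' : Integrable (fun p : α × β ↦ a p.1) ρ := ha.comp_measurable measurable_fst
  have hb' : Integrable (fun p : α × β ↦ b p.2) ρ := hb.comp_measurable measurable_snd
  simp only [lagrangeExponent]
  rw [integral_sub (ha'.fun_add hb') (he.const_mul s), integral_add ha' hb',
    integral_const_mul, integral_map measurable_fst.aemeasurable ha.1,
    integral_map measurable_snd.aemeasurable hb.1]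

end LagrangeExponent

section RateDistortion

variable {V : Type*} [MeasurableSpace V] {μ : Measure V} [IsProbabilityMeasure μ]
  {e : V × V → ℝ}

theorem mutualInfo_prod {W : Type*} [MeasurableSpace W] {ν : Measure W} [IsProbabilityMeasure ν] :
    mutualInfo (μ.prod ν) = 0 := by
  simp [mutualInfo, Measure.map_fst_prod, Measure.map_snd_prod, klDiv_self]

theorem RDP_eq_zero_of_lintegral_prod_le {D : ℝ≥0∞}
    (hD : ∫⁻ p, ENNReal.ofReal (e p) ∂(μ.prod μ) ≤ D) : RDP μ e D = 0 := by
  have hadm : IsProbabilityMeasure (μ.prod μ) ∧ (μ.prod μ).map Prod.fst = μ ∧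
      (μ.prod μ).map Prod.snd = μ ∧ ∫⁻ p, ENNReal.ofReal (e p) ∂(μ.prod μ) ≤ D :=
    ⟨inferInstance, by simp [Measure.map_fst_prod], by simp [Measure.map_snd_prod], hD⟩
  exact le_antisymm ((iInf₂_le (μ.prod μ) hadm).trans_eq mutualInfo_prod) zero_le

variable {a b : V → ℝ} {s D : ℝ}

theorem ofReal_lagrangeDual_le_RDP (he : Measurable e) (he0 : ∀ p, 0 ≤ e p) (hs : 0 ≤ s)
    (hD : 0 ≤ D) (ha : Integrable a μ) (hb : Integrable b μ)
    (hexp : Integrable (fun p ↦ exp (lagrangeExponent a b s e p)) (μ.prod μ)) :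
    ENNReal.ofReal (∫ x, a x ∂μ + ∫ x, b x ∂μ - s * D -
      log (∫ p, exp (lagrangeExponent a b s e p) ∂(μ.prod μ))) ≤ RDP μ e (ENNReal.ofReal D) := by
  refine le_iInf₂ fun ρ ⟨_, hfst, hsnd, hdist⟩ ↦ ?_
  have he_int : Integrable e ρ :=
    (lintegral_ofReal_ne_top_iff_integrable (by fun_prop) (ae_of_all _ he0)).1
      (ne_top_of_le_ne_top ENNReal.ofReal_ne_top hdist)
  have he_le : ∫ p, e p ∂ρ ≤ D := by
    rwa [← ENNReal.ofReal_le_ofReal_iff hD,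
      ofReal_integral_eq_lintegral_ofReal he_int (ae_of_all _ he0)]
  rw [← hfst] at ha
  rw [← hsnd] at hb
  have hL := integral_lagrangeExponent (s := s) ha hb he_int
  rw [hfst, hsnd] at hL
  rw [mutualInfo, hfst, hsnd]
  refine le_trans (ENNReal.ofReal_le_ofReal ?_) (ofReal_integral_sub_log_integral_exp_le_klDiv
    (integrable_lagrangeExponent (s := s) ha hb he_int) hexp)
  rw [hL]
  gcongr

theorem RDP_eq_of_tilted_lagrangeExponent {ρ : Measure (V × V)}
    (hρ : (μ.prod μ).tilted (lagrangeExponent a b s e) = ρ) (hfst : ρ.map Prod.fst = μ)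
    (hsnd : ρ.map Prod.snd = μ) (hdist : ∫⁻ p, ENNReal.ofReal (e p) ∂ρ = ENNReal.ofReal D)
    (he : Measurable e) (he0 : ∀ p, 0 ≤ e p) (hs : 0 ≤ s) (hD : 0 ≤ D) (ha : Integrable a μ)
    (hb : Integrable b μ)
    (hexp : Integrable (fun p ↦ exp (lagrangeExponent a b s e p)) (μ.prod μ)) :
    RDP μ e (ENNReal.ofReal D) = ENNReal.ofReal (∫ x, a x ∂μ + ∫ x, b x ∂μ - s * D -
      log (∫ p, exp (lagrangeExponent a b s e p) ∂(μ.prod μ))) := by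
  refine le_antisymm ?_ (ofReal_lagrangeDual_le_RDP he he0 hs hD ha hb hexp)
  have hprob : IsProbabilityMeasure ρ := hρ ▸ isProbabilityMeasure_tilted hexp
  have he_int : Integrable e ρ :=
    (lintegral_ofReal_ne_top_iff_integrable (by fun_prop) (ae_of_all _ he0)).1
      (hdist.trans_ne ENNReal.ofReal_ne_top)
  have he_eq : ∫ p, e p ∂ρ = D := by
    rw [integral_eq_lintegral_of_nonneg_ae (ae_of_all _ he0) (by fun_prop), hdist,
      ENNReal.toReal_ofReal hD]
  rw [← hfst] at ha
  rw [← hsnd] at hb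
  have hL_int := integrable_lagrangeExponent (s := s) ha hb he_int
  have hL := integral_lagrangeExponent (s := s) ha hb he_int
  rw [hfst, hsnd, he_eq] at hL
  have hrate : mutualInfo ρ = ENNReal.ofReal (∫ p, lagrangeExponent a b s e p ∂ρ -
      log (∫ p, exp (lagrangeExponent a b s e p) ∂(μ.prod μ))) := by
    rw [mutualInfo, hfst, hsnd]
    subst hρ
    exact klDiv_tilted_left hL_int hexp
  rw [← hL, ← hrate]
  exact iInf₂_le ρ ⟨hprob, hfst, hsnd, hdist.le⟩

end RateDistortion

section GaussianMoments

theorem integral_sub_sq_eq_variance_add {Ω : Type*} [MeasurableSpace Ω] {P : Measure Ω}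
    [IsProbabilityMeasure P] {X : Ω → ℝ} (hX : MemLp X 2 P) (c : ℝ) :
    ∫ ω, (X ω - c) ^ 2 ∂P = Var[X; P] + (P[X] - c) ^ 2 := by
  have hmean : ∫ ω, (X ω - c) ∂P = P[X] - c := by
    simp [integral_sub (hX.integrable one_le_two) (integrable_const c)]
  have hvar : Var[X; P] = ∫ ω, (X ω - c) ^ 2 ∂P - (∫ ω, (X ω - c) ∂P) ^ 2 :=
    (variance_sub_const hX.1 c).symm.trans (variance_eq_sub (hX.sub (memLp_const c)))
  rw [hvar, hmean, sub_add_cancel]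

variable (m c : ℝ) (v : ℝ≥0)

theorem integrable_sub_sq_gaussianReal : Integrable (fun x ↦ (x - c) ^ 2) (gaussianReal m v) :=
  ((memLp_id_gaussianReal 2).sub (memLp_const c)).integrable_sq

theorem integral_sub_sq_gaussianReal :
    ∫ x, (x - c) ^ 2 ∂(gaussianReal m v) = v + (m - c) ^ 2 := by
  simpa using integral_sub_sq_eq_variance_add (memLp_id_gaussianReal (μ := m) (v := v) 2) c

theorem lintegral_sub_sq_gaussianReal :
    ∫⁻ x, ENNReal.ofReal ((x - c) ^ 2) ∂(gaussianReal m v) =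
      ENNReal.ofReal (v + (m - c) ^ 2) := by
  rw [← integral_sub_sq_gaussianReal, ofReal_integral_eq_lintegral_ofReal
    (integrable_sub_sq_gaussianReal m c v) (ae_of_all _ fun _ ↦ sq_nonneg _)]

end GaussianMoments

/-- The conditional law of `Y` given `X = x` when `(X, Y)` is jointly Gaussian with correlation `r`
and both marginals equal to `N(m, v)`. -/
noncomputable def gaussianCondKernel (m : ℝ) (v : ℝ≥0) (r : ℝ) : Kernel ℝ ℝ where
  toFun x := gaussianReal (m + r * (x - m)) (v * (1 - r ^ 2).toNNReal)
  measurable' :=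
    measurable_gaussianReal.comp (by fun_prop : Measurable fun x ↦ (m + r * (x - m), _))

/-- The bivariate Gaussian law with correlation `r` and both marginals equal to `N(m, v)`, built
from its disintegration along the first coordinate. -/
noncomputable def correlatedGaussian (m : ℝ) (v : ℝ≥0) (r : ℝ) : Measure (ℝ × ℝ) :=
  gaussianReal m v ⊗ₘ gaussianCondKernel m v r

/-- The exponent of the density of `correlatedGaussian m v r` with respect to the product of its
marginals, split into functions of the single coordinates and a multiple of the squared error. -/
noncomputable def correlatedGaussianExponent (m : ℝ) (v : ℝ≥0) (r : ℝ) : ℝ × ℝ → ℝ :=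
  lagrangeExponent (fun x ↦ r / (2 * v * (1 + r)) * (x - m) ^ 2)
    (fun y ↦ r / (2 * v * (1 + r)) * (y - m) ^ 2) (r / (2 * v * (1 - r ^ 2)))
    (fun p ↦ (p.1 - p.2) ^ 2)

section CorrelatedGaussian

variable {m : ℝ} {v : ℝ≥0} {r : ℝ}

instance isMarkovKernel_gaussianCondKernel : IsMarkovKernel (gaussianCondKernel m v r) :=
  ⟨fun x ↦ inferInstanceAs (IsProbabilityMeasure (gaussianReal (m + r * (x - m)) _))⟩

instance isProbabilityMeasure_correlatedGaussian :
    IsProbabilityMeasure (correlatedGaussian m v r) :=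
  inferInstanceAs (IsProbabilityMeasure (_ ⊗ₘ _))

theorem correlatedGaussian_zero :
    correlatedGaussian m v 0 = (gaussianReal m v).prod (gaussianReal m v) := by
  have hconst : gaussianCondKernel m v 0 = Kernel.const ℝ (gaussianReal m v) := by
    ext1 x
    simp [gaussianCondKernel]
  rw [correlatedGaussian, hconst, Measure.compProd_const]

theorem map_fst_correlatedGaussian : (correlatedGaussian m v r).map Prod.fst = gaussianReal m v :=
  Measure.fst_compProd _ _

theorem lintegral_sub_sq_correlatedGaussian (hr : |r| ≤ 1) :
    ∫⁻ p, ENNReal.ofReal ((p.1 - p.2) ^ 2) ∂(correlatedGaussian m v r) =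
      ENNReal.ofReal (2 * v * (1 - r)) := by
  have hr2 : 0 ≤ 1 - r ^ 2 := sub_nonneg.2 ((sq_le_one_iff_abs_le_one r).2 hr)
  have hcond (x : ℝ) : ∫⁻ y, ENNReal.ofReal ((x - y) ^ 2) ∂(gaussianCondKernel m v r x) =
      ENNReal.ofReal (v * (1 - r ^ 2)) +
        ENNReal.ofReal ((1 - r) ^ 2) * ENNReal.ofReal ((x - m) ^ 2) := by
    simp_rw [sub_sq_comm x]
    refine (lintegral_sub_sq_gaussianReal _ x _).trans ?_
    rw [← ENNReal.ofReal_mul (by positivity), ← ENNReal.ofReal_add (by positivity) (by positivity),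
      NNReal.coe_mul, Real.coe_toNNReal _ hr2]
    ring_nf
  rw [correlatedGaussian, Measure.lintegral_compProd (by fun_prop)]
  simp only [hcond]
  rw [lintegral_add_left measurable_const, lintegral_const_mul _ (by fun_prop),
    lintegral_sub_sq_gaussianReal, lintegral_const, measure_univ, mul_one,
    ← ENNReal.ofReal_mul (by positivity), ← ENNReal.ofReal_add (by positivity) (by positivity)]
  ring_nf

theorem measurable_correlatedGaussianExponent : Measurable (correlatedGaussianExponent m v r) :=
  measurable_lagrangeExponent (by fun_prop) (by fun_prop) (by fun_prop)

theorem correlatedGaussianExponent_swap (p : ℝ × ℝ) :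
    correlatedGaussianExponent m v r p.swap = correlatedGaussianExponent m v r p := by
  simp only [correlatedGaussianExponent, lagrangeExponent, Prod.fst_swap, Prod.snd_swap]
  ring

theorem one_sub_sq_pos (hr : |r| < 1) : 0 < 1 - r ^ 2 :=
  sub_pos.2 ((sq_lt_one_iff_abs_lt_one r).2 hr)

theorem neg_sq_div_add_correlatedGaussianExponent (hv : v ≠ 0) (hr : |r| < 1) (x y : ℝ) :
    -(y - m) ^ 2 / (2 * v) + correlatedGaussianExponent m v r (x, y) =
      -(y - (m + r * (x - m))) ^ 2 / (2 * (v * (1 - r ^ 2))) := by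
  obtain ⟨hr_neg, hr_one⟩ := abs_lt.1 hr
  have hv' : (v : ℝ) ≠ 0 := NNReal.coe_ne_zero.2 hv
  have hadd : 1 + r ≠ 0 := by linarith
  have hsub : 1 - r ≠ 0 := by linarith
  have hfactor : 1 - r ^ 2 = (1 + r) * (1 - r) := by ring
  simp only [correlatedGaussianExponent, lagrangeExponent, hfactor]
  field_simp
  ring

theorem gaussianPDFReal_mul_exp_correlatedGaussianExponent (hv : v ≠ 0) (hr : |r| < 1) (x y : ℝ) :
    gaussianPDFReal m v y * exp (correlatedGaussianExponent m v r (x, y)) = √(1 - r ^ 2) *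
      gaussianPDFReal (m + r * (x - m)) (v * (1 - r ^ 2).toNNReal) y := by
  have hr2 : 0 < 1 - r ^ 2 := one_sub_sq_pos hr
  have hsqrt : √(1 - r ^ 2) ≠ 0 := (Real.sqrt_pos.2 hr2).ne'
  have hnorm : √(2 * π * (v * (1 - r ^ 2))) = √(2 * π * v) * √(1 - r ^ 2) := by
    rw [← mul_assoc, Real.sqrt_mul (by positivity)]
  rw [gaussianPDFReal, gaussianPDFReal, mul_assoc, ← Real.exp_add,
    neg_sq_div_add_correlatedGaussianExponent hv hr, NNReal.coe_mul, Real.coe_toNNReal _ hr2.le,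
    hnorm, mul_inv]
  field_simp

theorem gaussianReal_withDensity_exp_correlatedGaussianExponent (hv : v ≠ 0) (hr : |r| < 1)
    (x : ℝ) :
    (gaussianReal m v).withDensity
      (fun y ↦ ENNReal.ofReal (exp (correlatedGaussianExponent m v r (x, y)))) =
      ENNReal.ofReal √(1 - r ^ 2) • gaussianCondKernel m v r x := by
  have hr2 : 0 < 1 - r ^ 2 := one_sub_sq_pos hr
  have hcondVar : v * (1 - r ^ 2).toNNReal ≠ 0 := mul_ne_zero hv (Real.toNNReal_pos.2 hr2).ne'
  have hmeas := measurable_correlatedGaussianExponent (m := m) (v := v) (r := r)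
  change _ = _ • gaussianReal _ _
  rw [gaussianReal_of_var_ne_zero _ hv, gaussianReal_of_var_ne_zero _ hcondVar,
    ← withDensity_mul _ (measurable_gaussianPDF _ _) (by fun_prop),
    ← withDensity_smul _ (measurable_gaussianPDF _ _)]
  congr 1 with y
  simp only [Pi.mul_apply, Pi.smul_apply, smul_eq_mul, gaussianPDF]
  rw [← ENNReal.ofReal_mul (gaussianPDFReal_nonneg _ _ _), ← ENNReal.ofReal_mul (by positivity),
    gaussianPDFReal_mul_exp_correlatedGaussianExponent hv hr]

theorem prod_withDensity_exp_correlatedGaussianExponent (hv : v ≠ 0) (hr : |r| < 1) :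
    ((gaussianReal m v).prod (gaussianReal m v)).withDensity
      (fun p ↦ ENNReal.ofReal (exp (correlatedGaussianExponent m v r p))) =
      ENNReal.ofReal √(1 - r ^ 2) • correlatedGaussian m v r :=
  have hmeas := measurable_correlatedGaussianExponent (m := m) (v := v) (r := r)
  prod_withDensity_eq_smul_compProd (by fun_prop)
    (gaussianReal_withDensity_exp_correlatedGaussianExponent hv hr)

theorem prod_tilted_correlatedGaussianExponent (hv : v ≠ 0) (hr : |r| < 1) :
    ((gaussianReal m v).prod (gaussianReal m v)).tilted (correlatedGaussianExponent m v r) =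
      correlatedGaussian m v r :=
  tilted_eq_of_withDensity_eq_smul measurable_correlatedGaussianExponent
    (Real.sqrt_pos.2 (one_sub_sq_pos hr))
    (prod_withDensity_exp_correlatedGaussianExponent hv hr)

theorem map_snd_correlatedGaussian (hv : v ≠ 0) (hr : |r| < 1) :
    (correlatedGaussian m v r).map Prod.snd = gaussianReal m v := by
  have hswap : MeasurePreserving Prod.swap (correlatedGaussian m v r)
      (correlatedGaussian m v r) := by
    rw [← prod_tilted_correlatedGaussianExponent hv hr]
    exact measurePreserving_tilted Measure.measurePreserving_swap
      measurable_correlatedGaussianExponent correlatedGaussianExponent_swap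
  rw [map_snd_eq_map_fst_of_measurePreserving_swap hswap, map_fst_correlatedGaussian]

end CorrelatedGaussian

section GaussianRate

variable {m : ℝ} {v : ℝ≥0}

theorem RDP_gaussianReal_of_correlation (hv : v ≠ 0) {r : ℝ} (hr0 : 0 ≤ r) (hr1 : r < 1) :
    RDP (gaussianReal m v) (fun p ↦ (p.1 - p.2) ^ 2) (ENNReal.ofReal (2 * v * (1 - r))) =
      ENNReal.ofReal (-log √(1 - r ^ 2)) := by
  have hr : |r| < 1 := abs_lt.2 ⟨by linarith, hr1⟩
  have hr2 : 0 < 1 - r ^ 2 := one_sub_sq_pos hr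
  have hdensity := prod_withDensity_exp_correlatedGaussianExponent (m := m) hv hr
  have hpotential := (integrable_sub_sq_gaussianReal m m v).const_mul (r / (2 * v * (1 + r)))
  have hrate := RDP_eq_of_tilted_lagrangeExponent (prod_tilted_correlatedGaussianExponent hv hr)
    map_fst_correlatedGaussian (map_snd_correlatedGaussian hv hr)
    (lintegral_sub_sq_correlatedGaussian hr.le) (by fun_prop) (fun _ ↦ sq_nonneg _)
    (by positivity) (mul_nonneg (by positivity) (sub_nonneg.2 hr1.le)) hpotential hpotential
    (integrable_exp_of_withDensity_eq_smul measurable_correlatedGaussianExponent hdensity)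
  have hpartition := integral_exp_of_withDensity_eq_smul measurable_correlatedGaussianExponent
    (Real.sqrt_nonneg _) hdensity
  have hcancel : r / (2 * v * (1 + r)) * v + r / (2 * v * (1 + r)) * v -
      r / (2 * v * (1 - r ^ 2)) * (2 * v * (1 - r)) = 0 := by
    have hv' : (v : ℝ) ≠ 0 := NNReal.coe_ne_zero.2 hv
    field_simp
    ring
  rw [correlatedGaussianExponent] at hpartition
  rw [hrate, integral_const_mul, integral_sub_sq_gaussianReal, sub_self, zero_pow two_ne_zero,
    add_zero, hcancel, hpartition, zero_sub]

theorem RDP_gaussianReal_eq_zero {D : ℝ} (hD : 2 * v ≤ D) :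
    RDP (gaussianReal m v) (fun p ↦ (p.1 - p.2) ^ 2) (ENNReal.ofReal D) = 0 := by
  refine RDP_eq_zero_of_lintegral_prod_le ?_
  rw [← correlatedGaussian_zero, lintegral_sub_sq_correlatedGaussian (by simp), sub_zero, mul_one]
  exact ENNReal.ofReal_le_ofReal hD

theorem log_div_sqrt_eq_neg_log_sqrt {w : ℝ} (hw : 0 < w) (r : ℝ) :
    log (w / √(w * (2 * w * (1 - r)) - (2 * w * (1 - r)) ^ 2 / 4)) = -log √(1 - r ^ 2) := by
  have hsq : w * (2 * w * (1 - r)) - (2 * w * (1 - r)) ^ 2 / 4 = w ^ 2 * (1 - r ^ 2) := by ring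
  rw [hsq, Real.sqrt_mul (sq_nonneg w), Real.sqrt_sq hw.le, div_mul_cancel_left₀ hw.ne',
    Real.log_inv]

end GaussianRate

/-- the DP-RDF for a Gaussian distribution `N(μ_X, σ_X²)` and squared error is
`log(σ_X² / (σ_X² D − D²/4)^{1/2})` for `0 < D < 2σ_X²`, and `0` for `D ≥ 2σ_X²`. -/
theorem RDP_gaussian (μX : ℝ) (v : ℝ≥0) (hv : 0 < (v : ℝ)) :
    (∀ D : ℝ, 0 < D → D < 2 * (v : ℝ) →
      RDP (gaussianReal μX v) (fun p => (p.1 - p.2) ^ 2) (ENNReal.ofReal D) =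
        ENNReal.ofReal (Real.log ((v : ℝ) / Real.sqrt ((v : ℝ) * D - D ^ 2 / 4)))) ∧
    (∀ D : ℝ, 2 * (v : ℝ) ≤ D →
      RDP (gaussianReal μX v) (fun p => (p.1 - p.2) ^ 2) (ENNReal.ofReal D) = 0) := by
  refine ⟨fun D hD_pos hD_lt ↦ ?_, fun D hD ↦ RDP_gaussianReal_eq_zero hD⟩
  obtain ⟨r, hr0, hr1, rfl⟩ : ∃ r : ℝ, 0 ≤ r ∧ r < 1 ∧ 2 * v * (1 - r) = D :=
    ⟨1 - D / (2 * v), sub_nonneg.2 ((div_le_one (by positivity)).2 hD_lt.le),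
      sub_lt_self 1 (by positivity), by field_simp; ring⟩
  rw [RDP_gaussianReal_of_correlation (NNReal.coe_pos.1 hv).ne' hr0 hr1,
    log_div_sqrt_eq_neg_log_sqrt hv]
end

section
/- Let X ~ N(μ_X, σ_X²) and N ~ N(0, σ_N²) be independent, and define X̃ = (σ_X²/(σ_X² + σ_N²))^{1/2} (X − μ_X + N) + μ_X. Then the mutual information satisfies I(X; X̃) = (1/2) log((σ_X² + σ_N²)/σ_N²), and with D := E[(X − X̃)²] = 2σ_X²(1 − (σ_X²/(σ_X² + σ_N²))^{1/2}) this mutual information equals log( σ_X² / (σ_X² D − D²/4)^{1/2} ), i.e. the pair (X, X̃) achieves the distribution preserving rate-distortion function for N(μ_X, σ_X²) and squared error at distortion D. -/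
open MeasureTheory ProbabilityTheory Real
open scoped ENNReal NNReal Classical

/-!
If independent Gaussian noise `Z` of variance `w` is added to a function of `X` and the sum `Y` is
Gaussian with mean `μ` and variance `v`, then the joint law of `(X, Y)` has a density with respect
to the product of its marginals, whose logarithm is
`(1 / 2) log (v / w) - (Z - E Z)² / (2 w) + (Y - μ)² / (2 v)`. The two quadratic terms have
expectations `-1 / 2` and `1 / 2`, so `I(X; Y) = (1 / 2) log (v / w)`.

For the forward channel, a gain `a` with `a² (σ_X² + σ_N²) = σ_X²` makes the output law equal to
the source law, and the noise variance is `w = a² σ_N²`. The error `X - X̃` is Gaussian with second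
moment `(1 - a)² σ_X² + a² σ_N² = 2 σ_X² (1 - a)`, and `σ_X² D - D² / 4 = σ_X⁴ (1 - a²)`.
-/

section Density

variable {Ω α β γ : Type*} [MeasurableSpace Ω] [MeasurableSpace α] [MeasurableSpace β]
  [MeasurableSpace γ] {P : Measure Ω}

lemma llr_withDensity {ν : Measure α} [SigmaFinite ν] {f : α → ℝ≥0∞} (hf : AEMeasurable f ν) :
    llr (ν.withDensity f) ν =ᵐ[ν] fun x ↦ log (f x).toReal := by
  filter_upwards [ν.rnDeriv_withDensity₀ hf] with x hx
  rw [llr, hx]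

lemma klDiv_withDensity {ν : Measure α} [SigmaFinite ν] {f : α → ℝ≥0∞} (hf : AEMeasurable f ν)
    (hint : Integrable (fun x ↦ log (f x).toReal) (ν.withDensity f)) :
    klDiv (ν.withDensity f) ν = ENNReal.ofReal (∫ x, log (f x).toReal ∂ν.withDensity f) := by
  have hac : ν.withDensity f ≪ ν := withDensity_absolutelyContinuous ν f
  have hllr := hac.ae_eq (llr_withDensity hf)
  rw [klDiv, if_pos ⟨hac, hint.congr hllr.symm⟩, integral_congr_ae hllr]

lemma mutualInfo_map_prodMk_of_hasLaw_withDensity {μ : Measure α} {ν : Measure β}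
    [SigmaFinite μ] [SigmaFinite ν] {X : Ω → α} {Y : Ω → β} {f : α × β → ℝ≥0∞}
    (hX : HasLaw X μ P) (hY : HasLaw Y ν P) (hf : AEMeasurable f (μ.prod ν))
    (hXY : HasLaw (fun ω ↦ (X ω, Y ω)) ((μ.prod ν).withDensity f) P)
    (hint : Integrable (fun ω ↦ log (f (X ω, Y ω)).toReal) P) :
    mutualInfo (P.map fun ω ↦ (X ω, Y ω)) =
      ENNReal.ofReal (∫ ω, log (f (X ω, Y ω)).toReal ∂P) := by
  have hfst : (P.map fun ω ↦ (X ω, Y ω)).map Prod.fst = μ :=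
    (Measure.fst_map_prodMk₀ hY.aemeasurable).trans hX.map_eq
  have hsnd : (P.map fun ω ↦ (X ω, Y ω)).map Prod.snd = ν :=
    (Measure.snd_map_prodMk₀ hX.aemeasurable).trans hY.map_eq
  have hlog : AEStronglyMeasurable (fun p ↦ log (f p).toReal) ((μ.prod ν).withDensity f) :=
    (hf.mono_ac (withDensity_absolutelyContinuous _ _)).ennreal_toReal.log.aestronglyMeasurable
  have hint' : Integrable (fun p ↦ log (f p).toReal) ((μ.prod ν).withDensity f) := by
    rw [← hXY.map_eq] at hlog ⊢
    exact (integrable_map_measure hlog hXY.aemeasurable).2 hint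
  rw [mutualInfo, hfst, hsnd, hXY.map_eq, klDiv_withDensity hf hint', ← hXY.integral_comp hlog]
  rfl

lemma hasLaw_prodMk_withDensity_of_indepFun [IsFiniteMeasure P] {μ : Measure α} {ζ : Measure β}
    {ν : Measure γ} [SFinite ζ] [SFinite ν] {X : Ω → α} {Z : Ω → β} {φ : α → β → γ}
    {f : α × γ → ℝ≥0∞} (hX : HasLaw X μ P) (hZ : HasLaw Z ζ P) (hXZ : IndepFun X Z P)
    (hφ : Measurable φ.uncurry) (hf : Measurable f)
    (hφf : ∀ᵐ x ∂μ, ζ.map (φ x) = ν.withDensity fun y ↦ f (x, y)) :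
    HasLaw (fun ω ↦ (X ω, φ (X ω) (Z ω))) ((μ.prod ν).withDensity f) P := by
  have hT : Measurable fun p : α × β ↦ (p.1, φ p.1 p.2) := measurable_fst.prodMk hφ
  suffices hmap : (μ.prod ζ).map (fun p ↦ (p.1, φ p.1 p.2)) = (μ.prod ν).withDensity f from
    HasLaw.fun_comp ⟨hT.aemeasurable, hmap⟩ (hXZ.hasLaw_prod hX hZ)
  ext s hs
  rw [Measure.map_apply hT hs, Measure.prod_apply (hT hs), withDensity_apply _ hs,
    ← lintegral_indicator hs, lintegral_prod _ (hf.indicator hs).aemeasurable]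
  refine lintegral_congr_ae (hφf.mono fun x hx ↦ ?_)
  have hsx : MeasurableSet (Prod.mk x ⁻¹' s) := measurable_prodMk_left hs
  calc ζ (φ x ⁻¹' (Prod.mk x ⁻¹' s))
      = ζ.map (φ x) (Prod.mk x ⁻¹' s) := (Measure.map_apply hφ.of_uncurry_left hsx).symm
    _ = ∫⁻ y, (Prod.mk x ⁻¹' s).indicator (fun y ↦ f (x, y)) y ∂ν := by
      rw [hx, withDensity_apply _ hsx, lintegral_indicator hsx]

end Density

section Gaussian

variable {Ω α : Type*} [MeasurableSpace Ω] [MeasurableSpace α] {P : Measure Ω}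
  {μ μ₁ μ₂ : ℝ} {v v₁ v₂ : ℝ≥0}

lemma gaussianReal_eq_withDensity_gaussianReal (μ₁ μ₂ : ℝ) (hv₁ : v₁ ≠ 0) (hv₂ : v₂ ≠ 0) :
    gaussianReal μ₁ v₁ =
      (gaussianReal μ₂ v₂).withDensity fun y ↦ gaussianPDF μ₁ v₁ y / gaussianPDF μ₂ v₂ y := by
  rw [gaussianReal_of_var_ne_zero _ hv₁, gaussianReal_of_var_ne_zero _ hv₂,
    ← withDensity_mul _ (by fun_prop) (by fun_prop)]
  congr with y
  exact (ENNReal.mul_div_cancel (gaussianPDF_pos μ₂ hv₂ y).ne' gaussianPDF_ne_top).symm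

lemma log_gaussianPDFReal (μ : ℝ) (hv : v ≠ 0) (y : ℝ) :
    log (gaussianPDFReal μ v y) = -(1 / 2) * log (2 * π * v) - (y - μ) ^ 2 / (2 * v) := by
  rw [gaussianPDFReal, log_mul (by positivity) (exp_ne_zero _), log_exp, log_inv,
    log_sqrt (by positivity)]
  ring

lemma log_toReal_gaussianPDF_div (μ₁ μ₂ : ℝ) (hv₁ : v₁ ≠ 0) (hv₂ : v₂ ≠ 0) (y : ℝ) :
    log (gaussianPDF μ₁ v₁ y / gaussianPDF μ₂ v₂ y).toReal =
      1 / 2 * log (v₂ / v₁) - (y - μ₁) ^ 2 / (2 * v₁) + (y - μ₂) ^ 2 / (2 * v₂) := by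
  rw [ENNReal.toReal_div, toReal_gaussianPDF, toReal_gaussianPDF,
    log_div (gaussianPDFReal_pos _ _ _ hv₁).ne' (gaussianPDFReal_pos _ _ _ hv₂).ne',
    log_gaussianPDFReal _ hv₁, log_gaussianPDFReal _ hv₂,
    log_div (NNReal.coe_ne_zero.2 hv₂) (NNReal.coe_ne_zero.2 hv₁),
    log_mul (by positivity : 2 * π ≠ 0) (NNReal.coe_ne_zero.2 hv₁),
    log_mul (by positivity : 2 * π ≠ 0) (NNReal.coe_ne_zero.2 hv₂)]
  ring

lemma integrable_sub_sq_of_hasLaw_gaussianReal {X : Ω → ℝ} (hX : HasLaw X (gaussianReal μ v) P) :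
    Integrable (fun ω ↦ (X ω - μ) ^ 2) P := by
  have hint : Integrable (fun x : ℝ ↦ (x - μ) ^ 2) (P.map X) := by
    rw [hX.map_eq]
    exact ((memLp_id_gaussianReal 2).sub (memLp_const μ)).integrable_sq
  exact hint.comp_aemeasurable hX.aemeasurable

lemma integral_sub_sq_of_hasLaw_gaussianReal {X : Ω → ℝ} (hX : HasLaw X (gaussianReal μ v) P) :
    ∫ ω, (X ω - μ) ^ 2 ∂P = v := by
  have hmean : ∫ ω, X ω ∂P = μ := hX.integral_eq.trans integral_id_gaussianReal
  have hvar : Var[X; P] = v := hX.variance_eq.trans variance_id_gaussianReal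
  rw [← hvar, variance_eq_integral hX.aemeasurable, hmean]

lemma hasLaw_gaussianReal_linear_combination {X₁ X₂ : Ω → ℝ} (h₁ : HasLaw X₁ (gaussianReal μ₁ v₁) P)
    (h₂ : HasLaw X₂ (gaussianReal μ₂ v₂) P) (hindep : IndepFun X₁ X₂ P) (a b : ℝ) :
    HasLaw (fun ω ↦ a * X₁ ω + b * X₂ ω) (gaussianReal (a * μ₁ + b * μ₂)
      (.mk (a ^ 2) (sq_nonneg a) * v₁ + .mk (b ^ 2) (sq_nonneg b) * v₂)) P := by
  rw [← gaussianReal_conv_gaussianReal]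
  exact (hindep.comp (measurable_const_mul a) (measurable_const_mul b)).hasLaw_fun_add
    (gaussianReal_const_mul h₁ a) (gaussianReal_const_mul h₂ b)

lemma measurable_gaussianPDF_div {s : α → ℝ} (hs : Measurable s) (μ : ℝ) (w v : ℝ≥0) :
    Measurable fun p : α × ℝ ↦ gaussianPDF (s p.1) w p.2 / gaussianPDF μ v p.2 := by
  have hargs : Measurable fun p : α × ℝ ↦ (s p.1, w, p.2) := by fun_prop
  exact (measurable_uncurry_gaussianPDF.comp hargs).div (by fun_prop)

section AdditiveNoise

variable {X : Ω → α} {Z : Ω → ℝ} {s : α → ℝ} {m : ℝ} {w : ℝ≥0}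

lemma hasLaw_prodMk_additive_gaussian_noise (hX : AEMeasurable X P) (hs : Measurable s)
    (hZ : HasLaw Z (gaussianReal m w) P) (hXZ : IndepFun X Z P) (μ : ℝ) (hv : v ≠ 0)
    (hw : w ≠ 0) :
    HasLaw (fun ω ↦ (X ω, s (X ω) + Z ω)) (((P.map X).prod (gaussianReal μ v)).withDensity
      fun p ↦ gaussianPDF (m + s p.1) w p.2 / gaussianPDF μ v p.2) P := by
  have : IsProbabilityMeasure P := hZ.isProbabilityMeasure
  refine hasLaw_prodMk_withDensity_of_indepFun (φ := fun x z ↦ s x + z) ⟨hX, rfl⟩ hZ hXZ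
    (by fun_prop) (measurable_gaussianPDF_div (hs.const_add m) μ w v) (.of_forall fun x ↦ ?_)
  rw [gaussianReal_map_const_add]
  exact gaussianReal_eq_withDensity_gaussianReal _ _ hw hv

theorem mutualInfo_additive_gaussian_noise (hX : AEMeasurable X P) (hs : Measurable s)
    (hZ : HasLaw Z (gaussianReal m w) P) (hXZ : IndepFun X Z P)
    (hY : HasLaw (fun ω ↦ s (X ω) + Z ω) (gaussianReal μ v) P) (hv : v ≠ 0) (hw : w ≠ 0) :
    mutualInfo (P.map fun ω ↦ (X ω, s (X ω) + Z ω)) = ENNReal.ofReal (1 / 2 * log (v / w)) := by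
  have : IsProbabilityMeasure P := hZ.isProbabilityMeasure
  have hlog (ω : Ω) :
      log (gaussianPDF (m + s (X ω)) w (s (X ω) + Z ω) / gaussianPDF μ v (s (X ω) + Z ω)).toReal =
        1 / 2 * log (v / w) - (Z ω - m) ^ 2 / (2 * w) + (s (X ω) + Z ω - μ) ^ 2 / (2 * v) := by
    rw [log_toReal_gaussianPDF_div _ _ hw hv]
    ring
  have hZ_int := (integrable_sub_sq_of_hasLaw_gaussianReal hZ).div_const (2 * (w : ℝ))
  have hY_int := (integrable_sub_sq_of_hasLaw_gaussianReal hY).div_const (2 * (v : ℝ))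
  have hint : Integrable (fun ω ↦ 1 / 2 * log (v / w) - (Z ω - m) ^ 2 / (2 * w)) P :=
    (integrable_const _).sub hZ_int
  have hmean : ∫ ω, (1 / 2 * log (v / w) - (Z ω - m) ^ 2 / (2 * w) +
      (s (X ω) + Z ω - μ) ^ 2 / (2 * v)) ∂P = 1 / 2 * log (v / w) := by
    rw [integral_add hint hY_int, integral_sub (integrable_const _) hZ_int, integral_div,
      integral_div, integral_sub_sq_of_hasLaw_gaussianReal hZ,
      integral_sub_sq_of_hasLaw_gaussianReal hY, integral_const, probReal_univ, one_smul]
    field_simp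
    ring
  rw [mutualInfo_map_prodMk_of_hasLaw_withDensity ⟨hX, rfl⟩ hY
    (measurable_gaussianPDF_div (hs.const_add m) μ w v).aemeasurable
    (hasLaw_prodMk_additive_gaussian_noise hX hs hZ hXZ μ hv hw)]
  · simp_rw [hlog, hmean]
  · simp_rw [hlog]
    exact hint.add hY_int

end AdditiveNoise

end Gaussian

section ForwardChannel

/-- The distribution preserving rate-distortion function `R_DP(D)` of a real Gaussian source of
variance `v` under squared error, in nats. It is meaningful for `0 < D < 2 * v`. -/
noncomputable def gaussianRDP (v D : ℝ) : ℝ :=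
  log (v / √(v * D - D ^ 2 / 4))

lemma gaussianRDP_two_mul_mul_one_sub {v n a : ℝ} (hv : 0 < v) (hn : 0 < n)
    (ha : a ^ 2 * (v + n) = v) :
    gaussianRDP v (2 * v * (1 - a)) = 1 / 2 * log ((v + n) / n) := by
  have ha_sq : a ^ 2 = v / (v + n) := eq_div_of_mul_eq (by positivity) ha
  have hradicand : v * (2 * v * (1 - a)) - (2 * v * (1 - a)) ^ 2 / 4 = v ^ 2 / ((v + n) / n) := by
    calc v * (2 * v * (1 - a)) - (2 * v * (1 - a)) ^ 2 / 4 = v ^ 2 * (1 - a ^ 2) := by ring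
      _ = v ^ 2 / ((v + n) / n) := by rw [ha_sq]; field_simp; ring
  have hratio : v / √(v ^ 2 / ((v + n) / n)) = √((v + n) / n) := by
    rw [sqrt_div (by positivity), sqrt_sq hv.le, div_div_cancel₀ hv.ne']
  rw [gaussianRDP, hradicand, hratio, log_sqrt (by positivity)]
  ring

/-- The forward channel of gain `a` centred at `μ`, as a function of the source value `x` and the
noise value `z`. -/
def forwardChannel (a μ x z : ℝ) : ℝ :=
  a * (x - μ + z) + μ

variable {Ω : Type*} [MeasurableSpace Ω] {P : Measure Ω} {X N : Ω → ℝ} {μ a : ℝ} {v n : ℝ≥0}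

lemma hasLaw_forwardChannel (hX : HasLaw X (gaussianReal μ v) P)
    (hN : HasLaw N (gaussianReal 0 n) P) (hXN : IndepFun X N P) (ha : a ^ 2 * (v + n) = v) :
    HasLaw (fun ω ↦ forwardChannel a μ (X ω) (N ω)) (gaussianReal μ v) P := by
  have hvar : (.mk (a ^ 2) (sq_nonneg a) * v + .mk (a ^ 2) (sq_nonneg a) * n : ℝ≥0) = v :=
    NNReal.coe_injective (by push_cast [NNReal.coe_mk]; linear_combination ha)
  have hsum := gaussianReal_add_const
    (hasLaw_gaussianReal_linear_combination hX hN hXN a a) (μ - a * μ)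
  rw [hvar] at hsum
  convert hsum using 2
  · rw [forwardChannel]
    ring
  · ring

lemma integral_sub_forwardChannel_sq (hX : HasLaw X (gaussianReal μ v) P)
    (hN : HasLaw N (gaussianReal 0 n) P) (hXN : IndepFun X N P) (ha : a ^ 2 * (v + n) = v) :
    ∫ ω, (X ω - forwardChannel a μ (X ω) (N ω)) ^ 2 ∂P = 2 * v * (1 - a) := by
  have herror := hasLaw_gaussianReal_linear_combination hX hN hXN (1 - a) (-a)
  calc ∫ ω, (X ω - forwardChannel a μ (X ω) (N ω)) ^ 2 ∂P
      = ∫ ω, ((1 - a) * X ω + -a * N ω - ((1 - a) * μ + -a * 0)) ^ 2 ∂P := by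
        congr with ω; rw [forwardChannel]; ring
    _ = (1 - a) ^ 2 * v + (-a) ^ 2 * n := integral_sub_sq_of_hasLaw_gaussianReal herror
    _ = 2 * v * (1 - a) := by linear_combination ha

lemma mutualInfo_forwardChannel (hX : HasLaw X (gaussianReal μ v) P)
    (hN : HasLaw N (gaussianReal 0 n) P) (hXN : IndepFun X N P) (hv : v ≠ 0) (hn : n ≠ 0)
    (ha : a ^ 2 * (v + n) = v) :
    mutualInfo (P.map fun ω ↦ (X ω, forwardChannel a μ (X ω) (N ω))) =
      ENNReal.ofReal (1 / 2 * log ((v + n) / n)) := by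
  have ha_ne : a ≠ 0 := by
    rintro rfl
    simp_all [eq_comm]
  have hnoise_var : (.mk (a ^ 2) (sq_nonneg a) * n : ℝ≥0) ≠ 0 := by
    simp [← NNReal.coe_ne_zero, ha_ne, hn]
  have hsplit (ω : Ω) :
      forwardChannel a μ (X ω) (N ω) = (a * (X ω - μ) + μ) + a * N ω := by
    rw [forwardChannel]
    ring
  have hY := hasLaw_forwardChannel hX hN hXN ha
  simp_rw [hsplit] at hY ⊢
  have hratio : (v : ℝ) / (a ^ 2 * n) = (v + n) / n := by
    field_simp
    linear_combination -ha
  rw [← hratio]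
  exact mutualInfo_additive_gaussian_noise (s := fun x ↦ a * (x - μ) + μ) hX.aemeasurable
    (by fun_prop) (gaussianReal_const_mul hN a)
    (hXN.comp measurable_id (measurable_const_mul a)) hY hv hnoise_var

end ForwardChannel

/-- for independent `X ~ N(μ_X, σ_X²)` and `N ~ N(0, σ_N²)`, with
`X̃ = (σ_X²/(σ_X² + σ_N²))^{1/2} (X − μ_X + N) + μ_X`, the mutual information is
`I(X; X̃) = (1/2) log((σ_X² + σ_N²)/σ_N²)`, and with `D := E[(X − X̃)²]` this mutual
information equals `log(σ_X² / (σ_X² D − D²/4)^{1/2})`, i.e. the pair `(X, X̃)` achieves the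
distribution preserving rate-distortion function at distortion `D`. -/
theorem gaussian_forward_channel_achieves_RDP {Ω : Type*} [MeasurableSpace Ω] (P : Measure Ω)
    [IsProbabilityMeasure P] (X N : Ω → ℝ) (hXm : Measurable X) (hNm : Measurable N)
    (μX : ℝ) (vX vN : ℝ≥0) (hvX : 0 < (vX : ℝ)) (hvN : 0 < (vN : ℝ))
    (hX : P.map X = gaussianReal μX vX) (hN : P.map N = gaussianReal 0 vN)
    (hindep : IndepFun X N P)
    (X' : Ω → ℝ)
    (hX'def : X' = fun ω => Real.sqrt ((vX : ℝ) / ((vX : ℝ) + (vN : ℝ))) * (X ω - μX + N ω) + μX)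
    (D : ℝ) (hD : D = ∫ ω, (X ω - X' ω) ^ 2 ∂P) :
    mutualInfo (P.map (fun ω => (X ω, X' ω))) =
        ENNReal.ofReal ((1 / 2) * Real.log (((vX : ℝ) + (vN : ℝ)) / (vN : ℝ))) ∧
      mutualInfo (P.map (fun ω => (X ω, X' ω))) =
        ENNReal.ofReal (Real.log ((vX : ℝ) / Real.sqrt ((vX : ℝ) * D - D ^ 2 / 4))) := by
  subst hX'def
  have hX_law : HasLaw X (gaussianReal μX vX) P := ⟨hXm.aemeasurable, hX⟩
  have hN_law : HasLaw N (gaussianReal 0 vN) P := ⟨hNm.aemeasurable, hN⟩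
  have hgain : √((vX : ℝ) / (vX + vN)) ^ 2 * (vX + vN) = vX := by
    rw [sq_sqrt (by positivity), div_mul_cancel₀ _ (by positivity)]
  have hinfo := mutualInfo_forwardChannel hX_law hN_law hindep (NNReal.coe_pos.1 hvX).ne'
    (NNReal.coe_pos.1 hvN).ne' hgain
  have hdistortion : D = 2 * vX * (1 - √((vX : ℝ) / (vX + vN))) :=
    hD.trans (integral_sub_forwardChannel_sq hX_law hN_law hindep hgain)
  have hrate : gaussianRDP vX D = 1 / 2 * log ((vX + vN) / vN) :=
    hdistortion ▸ gaussianRDP_two_mul_mul_one_sub hvX hvN hgain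
  exact ⟨hinfo, hinfo.trans (congrArg ENNReal.ofReal hrate.symm)⟩
end
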